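/- Let S be a Polish metric space and let P be an asymptotically stable regular Markov operator on S with invariant probability measure μ*, which has the e-property in L_FM(S) at a point z ∈ S. If (x_m) is a sequence in S converging to z and (n_m) is a sequence of natural numbers with n_m → ∞, then the measures P^{n_m}δ_{x_m} converge weakly to μ* as m → ∞. -/

import Mathlib

open MeasureTheory ProbabilityTheory Filter Topology

/-- The `n`-step evolution of a measure under the Markov operator generated by the
transition kernel `κ`: `P⁰μ = μ`, `Pⁿ⁺¹μ = (Pⁿμ).bind κ`. -/
noncomputable def kIter {S : Type*} [MeasurableSpace S] (κ : ProbabilityTheory.Kernel S S) :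
    ℕ → Measure S → Measure S
  | 0, μ => μ
  | n + 1, μ => (kIter κ n μ).bind (fun x => κ x)

/-- The `n`-th iterate of the dual operator: `Uⁿf(x) = ∫ f d(Pⁿδₓ)`. -/
noncomputable def kDual {S : Type*} [MeasurableSpace S] (κ : ProbabilityTheory.Kernel S S)
    (n : ℕ) (f : S → ℝ) (x : S) : ℝ :=
  ∫ y, f y ∂(kIter κ n (Measure.dirac x))

/-- A real-valued function is bounded. -/
def IsBddFun {S : Type*} (f : S → ℝ) : Prop := ∃ C : ℝ, ∀ x, |f x| ≤ C

/-- Asymptotic stability: `μst` is an invariant probability measure and `Pⁿμ → μst`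
weakly for every Borel probability measure `μ`. -/
def IsAsympStable {S : Type*} [MeasurableSpace S] [TopologicalSpace S]
    (κ : ProbabilityTheory.Kernel S S) (μst : Measure S) : Prop :=
  IsProbabilityMeasure μst ∧ kIter κ 1 μst = μst ∧
    ∀ μ : Measure S, IsProbabilityMeasure μ → ∀ f : S → ℝ, Continuous f → IsBddFun f →
      Tendsto (fun n => ∫ x, f x ∂(kIter κ n μ)) atTop (𝓝 (∫ x, f x ∂μst))

/-- The e-property in `L_FM(S)` (1-Lipschitz functions with values in `[0,1]`) at a point
`z`: for every such `f`, `sup_{n} |Uⁿf(x) − Uⁿf(z)| → 0` as `x → z`. -/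
def EPropFMAt {S : Type*} [MeasurableSpace S] [PseudoMetricSpace S]
    (κ : ProbabilityTheory.Kernel S S) (z : S) : Prop :=
  ∀ f : S → ℝ, LipschitzWith 1 f → (∀ x, f x ∈ Set.Icc (0 : ℝ) 1) →
    Tendsto (fun x => ⨆ n : ℕ, |kDual κ n f x - kDual κ n f z|) (𝓝 z) (𝓝 0)


/-- The Markov operator generated by a Markov kernel preserves probability measures. -/
instance isProbabilityMeasure_kIter {S : Type*} [MeasurableSpace S] (κ : Kernel S S)
    [IsMarkovKernel κ] (n : ℕ) (μ : Measure S) [IsProbabilityMeasure μ] :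
    IsProbabilityMeasure (kIter κ n μ) := by
  induction n with
  | zero => assumption
  | succ n ih =>
    exact isProbabilityMeasure_bind κ.measurable.aemeasurable (ae_of_all _ fun _ => inferInstance)

/-- A function with values in `[0, 1]` has integral in `[0, 1]` against a probability measure. -/
theorem integral_mem_Icc_zero_one {S : Type*} [MeasurableSpace S] (μ : Measure S)
    [IsProbabilityMeasure μ] {f : S → ℝ} (hf : ∀ y, f y ∈ Set.Icc (0 : ℝ) 1) :
    ∫ y, f y ∂μ ∈ Set.Icc (0 : ℝ) 1 := by
  refine ⟨integral_nonneg fun y => (hf y).1, ?_⟩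
  simpa using integral_mono_of_nonneg (ae_of_all μ fun y => (hf y).1) (integrable_const (1 : ℝ))
    (ae_of_all μ fun y => (hf y).2)

/-- Weak convergence of probability measures can be tested on `1`-Lipschitz functions with values
in `[0, 1]`. -/
theorem tendsto_probabilityMeasure_of_forall_lipschitz_one {ι S : Type*} [PseudoMetricSpace S]
    [MeasurableSpace S] [OpensMeasurableSpace S] {F : Filter ι} [F.IsCountablyGenerated]
    {μs : ι → ProbabilityMeasure S} {μ : ProbabilityMeasure S}
    (h : ∀ g : S → ℝ, LipschitzWith 1 g → (∀ y, g y ∈ Set.Icc (0 : ℝ) 1) →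
      Tendsto (fun i => ∫ y, g y ∂(μs i : Measure S)) F (𝓝 (∫ y, g y ∂(μ : Measure S)))) :
    Tendsto μs F (𝓝 μ) := by
  rw [tendsto_iff_forall_lipschitz_integral_tendsto]
  rintro f ⟨C, hC⟩ ⟨L, hL⟩
  obtain ⟨z⟩ : Nonempty S := (μ : Measure S).nonempty_of_neZero
  have hC0 : 0 ≤ C := dist_nonneg.trans (hC z z)
  set K : ℝ := 2 * C + L + 1 with hK
  have hKpos : 0 < K := by positivity
  set g : S → ℝ := fun y => (f y - f z + C) / K with hg
  have hg_lip : LipschitzWith 1 g := by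
    refine LipschitzWith.of_dist_le_mul fun a b => ?_
    have hab := hL.dist_le_mul a b
    have hd : 0 ≤ dist a b := dist_nonneg
    have hsub : g a - g b = (f a - f b) / K := by simp only [hg]; ring
    rw [Real.dist_eq, hsub, abs_div, abs_of_pos hKpos, div_le_iff₀ hKpos, ← Real.dist_eq]
    simp only [NNReal.coe_one, one_mul]
    nlinarith
  have hg_mem : ∀ y, g y ∈ Set.Icc (0 : ℝ) 1 := fun y => by
    have hy := abs_le.1 (Real.dist_eq (f y) (f z) ▸ hC y z)
    have hL0 : (0 : ℝ) ≤ L := L.2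
    exact ⟨div_nonneg (by linarith) hKpos.le, (div_le_one hKpos).2 (by linarith)⟩
  have hfg : f = fun y => K * g y + (f z - C) := by
    funext y
    simp only [hg]
    field_simp
    ring
  have hint (ν : ProbabilityMeasure S) :
      ∫ y, f y ∂(ν : Measure S) = K * ∫ y, g y ∂(ν : Measure S) + (f z - C) := by
    have hgi : Integrable g (ν : Measure S) :=
      .of_mem_Icc 0 1 hg_lip.continuous.measurable.aemeasurable (ae_of_all _ hg_mem)
    conv_lhs => rw [hfg]
    rw [integral_add (hgi.const_mul K) (integrable_const _), integral_const_mul]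
    simp
  simp only [hint]
  exact ((h g hg_lip hg_mem).const_mul K).add_const _

/-- For an asymptotically stable regular Markov operator with the e-property in `L_FM(S)` at
`z`: if `xₘ → z` and `nₘ → ∞`, then `P^{nₘ}δ_{xₘ}` converges weakly to the invariant
measure. -/
theorem kIter_dirac_tendsto_invariant
    {S : Type*} [MetricSpace S] [CompleteSpace S] [SecondCountableTopology S]
    [MeasurableSpace S] [BorelSpace S]
    (κ : ProbabilityTheory.Kernel S S) [IsMarkovKernel κ]
    (μst : Measure S) (hstab : IsAsympStable κ μst)
    (z : S) (hEz : EPropFMAt κ z)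
    (x : ℕ → S) (hx : Tendsto x atTop (𝓝 z))
    (n : ℕ → ℕ) (hn : Tendsto n atTop atTop) :
    ∀ f : S → ℝ, Continuous f → IsBddFun f →
      Tendsto (fun m => ∫ y, f y ∂(kIter κ (n m) (Measure.dirac (x m)))) atTop
        (𝓝 (∫ y, f y ∂μst)) := by
  intro f hf hfb
  obtain ⟨hprob, -, hconv⟩ := hstab
  let μs : ℕ → ProbabilityMeasure S := fun m => ⟨kIter κ (n m) (Measure.dirac (x m)), inferInstance⟩
  let μ : ProbabilityMeasure S := ⟨μst, hprob⟩
  have hweak : Tendsto μs atTop (𝓝 μ) := by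
    refine tendsto_probabilityMeasure_of_forall_lipschitz_one fun g hg hg01 => ?_
    have hz : Tendsto (fun m => kDual κ (n m) g z) atTop (𝓝 (∫ y, g y ∂μst)) :=
      (hconv (Measure.dirac z) inferInstance g hg.continuous
        ⟨1, fun y => abs_le.2 ⟨by linarith [(hg01 y).1], (hg01 y).2⟩⟩).comp hn
    have hdiff : Tendsto (fun m => kDual κ (n m) g (x m) - kDual κ (n m) g z) atTop (𝓝 0) := by
      refine squeeze_zero_norm (fun m => ?_) ((hEz g hg hg01).comp hx)
      refine le_ciSup (f := fun k => |kDual κ k g (x m) - kDual κ k g z|) ⟨1, ?_⟩ (n m)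
      rintro _ ⟨k, rfl⟩
      have hxm := integral_mem_Icc_zero_one (kIter κ k (Measure.dirac (x m))) hg01
      have hzk := integral_mem_Icc_zero_one (kIter κ k (Measure.dirac z)) hg01
      exact abs_le.2 ⟨by unfold kDual; linarith [hxm.1, hzk.2],
        by unfold kDual; linarith [hxm.2, hzk.1]⟩
    simpa [kDual] using! hdiff.add hz
  obtain ⟨C, hC⟩ := hfb
  exact ProbabilityMeasure.tendsto_iff_forall_integral_tendsto.1 hweak
    (BoundedContinuousFunction.ofNormedAddCommGroup f hf C hC)
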